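/- Let n ≥ 1 and let F be the set of all vectors of weight 0 or 2 in (Fin n → ZMod 2) (the point set of the looped clique matroid M^ℓ(K_n)). Then for every simple binary matroid E ⊆ (Fin m → ZMod 2), any two matroid homomorphisms τ, τ' : E → F are joined by a walk in the recolouring graph mCol(E, F); that is, the matroid recolouring problem for M^ℓ(K_n) is trivial. -/

import Mathlib

/-- A circuit of a binary matroid with point set `E`: a minimal nonempty subset summing to 0. -/
def IsCircuit {P : Type*} [AddCommGroup P] (E Z : Finset P) : Prop :=
  Z ⊆ E ∧ Z.Nonempty ∧ ∑ e ∈ Z, e = 0 ∧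
    ∀ Z' ⊆ Z, Z'.Nonempty → ∑ e ∈ Z', e = 0 → Z' = Z

/-- A cocircuit: a minimal nonempty subset meeting every circuit evenly. -/
def IsCocircuit {P : Type*} [AddCommGroup P] [DecidableEq P] (E C : Finset P) : Prop :=
  C ⊆ E ∧ C.Nonempty ∧ (∀ Z, IsCircuit E Z → Even (C ∩ Z).card) ∧
    ∀ C' ⊆ C, C'.Nonempty → (∀ Z, IsCircuit E Z → Even (C' ∩ Z).card) → C' = C

/-- A matroid homomorphism from the matroid on `E` to the matroid on `F`. -/
def IsMHom {P Q : Type*} [AddCommGroup P] [AddCommGroup Q]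
    (E : Finset P) (F : Finset Q) (τ : P → Q) : Prop :=
  (∀ e ∈ E, τ e ∈ F) ∧ ∀ Z, IsCircuit E Z → ∑ e ∈ Z, τ e = 0

/-- Adjacency in the recolouring graph: the maps differ exactly on a cocircuit. -/
def MAdj {P Q : Type*} [AddCommGroup P] [AddCommGroup Q] [DecidableEq P]
    (E : Finset P) (τ τ' : P → Q) : Prop :=
  ∃ C, IsCocircuit E C ∧ ∀ e ∈ E, (τ e ≠ τ' e ↔ e ∈ C)

/-- One step of a walk in `mCol(E,F)`: both maps are homomorphisms and they are
equal (as maps on `E`) or adjacent. -/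
def MStep {P Q : Type*} [AddCommGroup P] [AddCommGroup Q] [DecidableEq P]
    (E : Finset P) (F : Finset Q) (τ τ' : P → Q) : Prop :=
  IsMHom E F τ ∧ IsMHom E F τ' ∧ ((∀ e ∈ E, τ e = τ' e) ∨ MAdj E τ τ')

/-- Joined by a walk in the recolouring graph `mCol(E,F)`. -/
def MWalk {P Q : Type*} [AddCommGroup P] [AddCommGroup Q] [DecidableEq P]
    (E : Finset P) (F : Finset Q) : (P → Q) → (P → Q) → Prop :=
  Relation.ReflTransGen (MStep E F)

/-- The indicator vector of a vertex. -/
def ind {V : Type*} [DecidableEq V] (u : V) : V → ZMod 2 := Pi.single u 1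

/-- The decision graph of a set `F` of nonzero vectors. -/
def decisionGraph {m : ℕ} (F : Finset (Fin m → ZMod 2)) : SimpleGraph (Fin m → ZMod 2) where
  Adj v w := v + w ∈ F ∧ v ≠ w
  symm := by
    constructor
    intro v w h
    exact ⟨by rw [add_comm]; exact h.1, h.2.symm⟩
  loopless := by
    constructor
    intro v h
    exact h.2 rfl

/-- The weight of a vector: its number of nonzero coordinates. -/
def wt {n : ℕ} (e : Fin n → ZMod 2) : ℕ := (Finset.univ.filter fun i => e i ≠ 0).card

/-!
The points of `M^ℓ(K_V)` are the vectors `ind u + ind v`, so the coordinates of a homomorphism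
into it are cocycles of `E`. Fix a root vertex `j`. While some coordinate `i ≠ j` of `τ` is not
identically zero, its support contains a cocircuit `C`. Adding `ind i + ind j` to `τ` on `C`
turns `ind i + ind v` into `ind v + ind j`, again a point of `M^ℓ(K_V)`, and shrinks the support
of `τ` off the root. So `τ` walks to a homomorphism supported on the coordinate `j` alone, which
is zero; since walks are reversible, any two homomorphisms are joined through zero.
-/

section Cocycle

variable {P : Type*} [AddCommGroup P] [DecidableEq P] {E C D : Finset P}

/-- A cocycle of the binary matroid on `E`: a subset meeting every circuit evenly. Cocircuits are
the minimal nonempty cocycles. -/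
def IsCocycle (E D : Finset P) : Prop :=
  D ⊆ E ∧ ∀ Z, IsCircuit E Z → Even (D ∩ Z).card

theorem IsCocircuit.isCocycle (hC : IsCocircuit E C) : IsCocycle E C :=
  ⟨hC.1, hC.2.2.1⟩

theorem IsCocycle.exists_isCocircuit_subset (hD : IsCocycle E D) (hne : D.Nonempty) :
    ∃ C ⊆ D, IsCocircuit E C := by
  obtain ⟨C, hCD, ⟨hC, hCne⟩, hmin⟩ :=
    exists_minimal_le_of_wellFoundedLT (fun C => IsCocycle E C ∧ C.Nonempty) D ⟨hD, hne⟩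
  refine ⟨C, hCD, hC.1, hCne, hC.2, fun C' hC' hne' heven => ?_⟩
  exact hC'.antisymm (hmin ⟨⟨hC'.trans hC.1, heven⟩, hne'⟩ hC')

theorem sum_eq_card_filter_ne_zero {α : Type*} (s : Finset α) (f : α → ZMod 2) :
    ∑ a ∈ s, f a = (s.filter fun a => f a ≠ 0).card := by
  rw [← Finset.sum_filter_ne_zero, Finset.cast_card]
  exact Finset.sum_congr rfl fun a ha => Fin.eq_one_of_ne_zero _ (Finset.mem_filter.1 ha).2

theorem isCocycle_filter_ne_zero {f : P → ZMod 2}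
    (hf : ∀ Z, IsCircuit E Z → ∑ e ∈ Z, f e = 0) :
    IsCocycle E (E.filter fun e => f e ≠ 0) := by
  refine ⟨Finset.filter_subset _ _, fun Z hZ => ?_⟩
  rw [Finset.filter_inter, Finset.inter_eq_right.2 hZ.1, ← ZMod.natCast_eq_zero_iff_even,
    ← sum_eq_card_filter_ne_zero]
  exact hf Z hZ

end Cocycle

section Shift

variable {P Q : Type*} [DecidableEq P] [AddCommMonoid Q] {C : Finset P}

/-- The map obtained from `τ` by adding the constant vector `v` on `C`: the recolouring move
along `C`. -/
def shiftOn (C : Finset P) (v : Q) (τ : P → Q) (e : P) : Q :=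
  τ e + if e ∈ C then v else 0

theorem shiftOn_of_mem (τ : P → Q) (v : Q) {e : P} (he : e ∈ C) :
    shiftOn C v τ e = τ e + v := by
  simp [shiftOn, he]

theorem shiftOn_of_notMem (τ : P → Q) (v : Q) {e : P} (he : e ∉ C) :
    shiftOn C v τ e = τ e := by
  simp [shiftOn, he]

theorem sum_shiftOn (C Z : Finset P) (v : Q) (τ : P → Q) :
    ∑ e ∈ Z, shiftOn C v τ e = ∑ e ∈ Z, τ e + (C ∩ Z).card • v := by
  simp only [shiftOn, Finset.sum_add_distrib, Finset.sum_ite_mem, Finset.sum_const,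
    Finset.inter_comm Z C]

end Shift

section Recolouring

variable {P Q : Type*} [AddCommGroup P] [AddCommGroup Q] {E C : Finset P} {F : Finset Q}
  {τ τ' : P → Q} {v : Q}

theorem isMHom_zero (hF : 0 ∈ F) : IsMHom E F 0 :=
  ⟨fun _ _ => hF, fun _ _ => Finset.sum_const_zero⟩

theorem IsMHom.sum_apply_eq_zero {V A : Type*} [AddCommGroup A] {F : Finset (V → A)}
    {τ : P → V → A} (hτ : IsMHom E F τ) (i : V) {Z : Finset P} (hZ : IsCircuit E Z) :
    ∑ e ∈ Z, τ e i = 0 := by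
  simpa using congrFun (hτ.2 Z hZ) i

variable [DecidableEq P]

theorem MStep.symm (h : MStep E F τ τ') : MStep E F τ' τ := by
  obtain ⟨hτ, hτ', heq | ⟨C, hC, hdiff⟩⟩ := h
  · exact ⟨hτ', hτ, Or.inl fun e he => (heq e he).symm⟩
  · exact ⟨hτ', hτ, Or.inr ⟨C, hC, fun e he => ne_comm.trans (hdiff e he)⟩⟩

theorem MWalk.symm (h : MWalk E F τ τ') : MWalk E F τ' τ :=
  have : Std.Symm (MStep E F) := ⟨fun _ _ => MStep.symm⟩
  Relation.ReflTransGen.stdSymm.symm _ _ h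

theorem IsCocycle.isMHom_shiftOn [Module (ZMod 2) Q] (hC : IsCocycle E C) (hτ : IsMHom E F τ)
    (hv : ∀ e ∈ C, τ e + v ∈ F) : IsMHom E F (shiftOn C v τ) := by
  refine ⟨fun e he => ?_, fun Z hZ => ?_⟩
  · by_cases heC : e ∈ C
    · exact shiftOn_of_mem τ v heC ▸ hv e heC
    · exact shiftOn_of_notMem τ v heC ▸ hτ.1 e he
  · obtain ⟨r, hr⟩ := hC.2 Z hZ
    rw [sum_shiftOn, hτ.2 Z hZ, zero_add, hr, add_smul, ZModModule.add_self]

theorem IsCocircuit.mStep_shiftOn [Module (ZMod 2) Q] (hC : IsCocircuit E C)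
    (hτ : IsMHom E F τ) (hv₀ : v ≠ 0) (hv : ∀ e ∈ C, τ e + v ∈ F) :
    MStep E F τ (shiftOn C v τ) := by
  refine ⟨hτ, hC.isCocycle.isMHom_shiftOn hτ hv, Or.inr ⟨C, hC, fun e _ => ?_⟩⟩
  simp [shiftOn, hv₀]

end Recolouring

section LoopedClique

variable {V : Type*} [DecidableEq V] {i j : V} {x : V → ZMod 2}

theorem ind_add_ind_apply_ne_zero_iff (h : i ≠ j) (k : V) :
    (ind i + ind j : V → ZMod 2) k ≠ 0 ↔ k = i ∨ k = j := by
  simp only [ind, Pi.add_apply, Pi.single_apply]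
  grind

theorem ind_add_ind_ne_zero (h : i ≠ j) : (ind i + ind j : V → ZMod 2) ≠ 0 :=
  Function.ne_iff.2 ⟨i, (ind_add_ind_apply_ne_zero_iff h i).2 (Or.inl rfl)⟩

variable [Fintype V]

variable (V) in
/-- The point set of the looped clique matroid `M^ℓ(K_V)`: the incidence vectors of the edges and
loops of the clique on `V`. A loop is the case `u = v` and contributes the zero vector. -/
def loopedClique : Finset (V → ZMod 2) :=
  Finset.univ.image fun p : V × V => ind p.1 + ind p.2

theorem mem_loopedClique : x ∈ loopedClique V ↔ ∃ u v, ind u + ind v = x := by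
  simp [loopedClique]

theorem ind_add_ind_mem_loopedClique (u v : V) : ind u + ind v ∈ loopedClique V :=
  mem_loopedClique.2 ⟨u, v, rfl⟩

theorem zero_mem_loopedClique [Nonempty V] : 0 ∈ loopedClique V :=
  mem_loopedClique.2 ⟨Classical.arbitrary V, Classical.arbitrary V, ZModModule.add_self _⟩

theorem exists_eq_ind_add_ind_of_apply_ne_zero (hx : x ∈ loopedClique V) (hi : x i ≠ 0) :
    ∃ w, x = ind i + ind w := by
  obtain ⟨u, v, rfl⟩ := mem_loopedClique.1 hx
  have huv : u ≠ v := by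
    rintro rfl
    exact hi (congrFun (ZModModule.add_self (ind u)) i)
  obtain rfl | rfl := (ind_add_ind_apply_ne_zero_iff huv i).1 hi
  · exact ⟨v, rfl⟩
  · exact ⟨u, add_comm _ _⟩

theorem add_ind_add_ind_mem_loopedClique (hx : x ∈ loopedClique V) (hi : x i ≠ 0) (j : V) :
    x + (ind i + ind j) ∈ loopedClique V := by
  obtain ⟨w, rfl⟩ := exists_eq_ind_add_ind_of_apply_ne_zero hx hi
  have hcancel : ind i + ind w + (ind i + ind j) = ind w + ind j := by
    rw [add_add_add_comm, ZModModule.add_self, zero_add]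
  exact hcancel ▸ ind_add_ind_mem_loopedClique w j

theorem eq_zero_of_mem_loopedClique (hx : x ∈ loopedClique V) (h : ∀ i ≠ j, x i = 0) :
    x = 0 := by
  obtain ⟨u, v, rfl⟩ := mem_loopedClique.1 hx
  obtain rfl | huv := eq_or_ne u v
  · exact ZModModule.add_self _
  · have eq_root : ∀ k, k = u ∨ k = v → k = j := fun k hk =>
      not_imp_comm.1 (h k) ((ind_add_ind_apply_ne_zero_iff huv k).2 hk)
    exact absurd ((eq_root u (Or.inl rfl)).trans (eq_root v (Or.inr rfl)).symm) huv

theorem eq_sum_ind (x : V → ZMod 2) : x = ∑ i with x i ≠ 0, ind i := by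
  ext k
  simp only [Finset.sum_apply, ind, Finset.sum_pi_single, Finset.mem_filter_univ]
  split_ifs with hk
  · exact Fin.eq_one_of_ne_zero _ hk
  · exact not_not.1 hk

theorem mem_loopedClique_iff_wt {n : ℕ} [NeZero n] {x : Fin n → ZMod 2} :
    x ∈ loopedClique (Fin n) ↔ wt x = 0 ∨ wt x = 2 := by
  constructor
  · intro hx
    obtain ⟨u, v, rfl⟩ := mem_loopedClique.1 hx
    obtain rfl | huv := eq_or_ne u v
    · exact Or.inl (by simp [wt, ZModModule.add_self])
    · right
      simp only [wt, ind_add_ind_apply_ne_zero_iff huv, Finset.filter_or, Finset.filter_eq',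
        Finset.mem_univ, if_true]
      exact Finset.card_pair huv
  · rintro (h | h)
    · rw [eq_sum_ind x, Finset.card_eq_zero.1 h, Finset.sum_empty]
      exact zero_mem_loopedClique
    · obtain ⟨u, v, huv, hsupp⟩ := Finset.card_eq_two.1 h
      rw [eq_sum_ind x, hsupp, Finset.sum_pair huv]
      exact ind_add_ind_mem_loopedClique u v

end LoopedClique

section WalkToZero

variable {P V : Type*} [DecidableEq V] [Fintype V] {E C : Finset P} {i j : V}
  {τ : P → V → ZMod 2}

/-- The nonzero entries of `τ`, seen as an `E × V` matrix, outside the column of the root `j`.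
It shrinks strictly along the walk to zero. -/
def offSupport (E : Finset P) (j : V) (τ : P → V → ZMod 2) : Finset (P × V) :=
  (E ×ˢ Finset.univ).filter fun p => p.2 ≠ j ∧ τ p.1 p.2 ≠ 0

theorem mem_offSupport {e : P} : (e, i) ∈ offSupport E j τ ↔ e ∈ E ∧ i ≠ j ∧ τ e i ≠ 0 := by
  simp [offSupport]

theorem offSupport_shiftOn_ssubset [DecidableEq P] (hij : i ≠ j)
    (hC : C ⊆ E.filter fun e => τ e i ≠ 0) (hne : C.Nonempty) :
    offSupport E j (shiftOn C (ind i + ind j) τ) ⊂ offSupport E j τ := by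
  have apply_ne_zero {e : P} (he : e ∈ C) : τ e i ≠ 0 := (Finset.mem_filter.1 (hC he)).2
  refine Finset.ssubset_iff_subset_ne.2 ⟨?_, ?_⟩
  · rintro ⟨e, l⟩ hl
    obtain ⟨heE, hlj, hl⟩ := mem_offSupport.1 hl
    refine mem_offSupport.2 ⟨heE, hlj, ?_⟩
    by_cases heC : e ∈ C
    · obtain rfl | hli := eq_or_ne l i
      · exact apply_ne_zero heC
      · simpa [shiftOn_of_mem _ _ heC, ind, hli, hlj] using hl
    · rwa [shiftOn_of_notMem _ _ heC] at hl
  · obtain ⟨c, hc⟩ := hne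
    have shifted_eq_zero : shiftOn C (ind i + ind j) τ c i = 0 := by
      rw [shiftOn_of_mem _ _ hc, Pi.add_apply, Fin.eq_one_of_ne_zero _ (apply_ne_zero hc),
        Fin.eq_one_of_ne_zero _ ((ind_add_ind_apply_ne_zero_iff hij i).2 (Or.inl rfl))]
      exact CharTwo.add_self_eq_zero 1
    intro heq
    have hmem : (c, i) ∈ offSupport E j τ :=
      mem_offSupport.2 ⟨(Finset.mem_filter.1 (hC hc)).1, hij, apply_ne_zero hc⟩
    exact (mem_offSupport.1 (heq ▸ hmem)).2.2 shifted_eq_zero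

variable [AddCommGroup P]

theorem IsMHom.eq_zero_of_offSupport_eq_empty (hτ : IsMHom E (loopedClique V) τ)
    (h : offSupport E j τ = ∅) {e : P} (he : e ∈ E) : τ e = 0 := by
  refine eq_zero_of_mem_loopedClique (j := j) (hτ.1 e he) fun i hij => ?_
  by_contra hi
  exact Finset.eq_empty_iff_forall_notMem.1 h (e, i) (mem_offSupport.2 ⟨he, hij, hi⟩)

variable [DecidableEq P]

theorem IsMHom.exists_mStep_offSupport_ssubset (hτ : IsMHom E (loopedClique V) τ)
    (h : (offSupport E j τ).Nonempty) :
    ∃ σ, MStep E (loopedClique V) τ σ ∧ offSupport E j σ ⊂ offSupport E j τ := by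
  obtain ⟨⟨e, i⟩, hei⟩ := h
  obtain ⟨he, hij, hi⟩ := mem_offSupport.1 hei
  obtain ⟨C, hCsupp, hC⟩ :=
    (isCocycle_filter_ne_zero fun _ => hτ.sum_apply_eq_zero i).exists_isCocircuit_subset
      ⟨e, Finset.mem_filter.2 ⟨he, hi⟩⟩
  refine ⟨shiftOn C (ind i + ind j) τ, hC.mStep_shiftOn hτ (ind_add_ind_ne_zero hij) ?_,
    offSupport_shiftOn_ssubset hij hCsupp hC.2.1⟩
  intro c hc
  obtain ⟨hcE, hci⟩ := Finset.mem_filter.1 (hCsupp hc)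
  exact add_ind_add_ind_mem_loopedClique (hτ.1 c hcE) hci j

theorem IsMHom.mWalk_zero [Nonempty V] (hτ : IsMHom E (loopedClique V) τ) :
    MWalk E (loopedClique V) τ 0 := by
  let j := Classical.arbitrary V
  induction hs : offSupport E j τ using Finset.strongInduction generalizing τ with
  | H s ih =>
    subst hs
    obtain hempty | hne := (offSupport E j τ).eq_empty_or_nonempty
    · exact .single ⟨hτ, isMHom_zero zero_mem_loopedClique,
        Or.inl fun _ => hτ.eq_zero_of_offSupport_eq_empty hempty⟩
    · obtain ⟨σ, hstep, hlt⟩ := hτ.exists_mStep_offSupport_ssubset hne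
      exact .head hstep (ih _ hlt hstep.2.1 rfl)

end WalkToZero

theorem stmt19_general {P V : Type*} [AddCommGroup P] [DecidableEq P] [DecidableEq V] [Fintype V]
    [Nonempty V] {E : Finset P} {τ τ' : P → V → ZMod 2} (hτ : IsMHom E (loopedClique V) τ)
    (hτ' : IsMHom E (loopedClique V) τ') : MWalk E (loopedClique V) τ τ' :=
  hτ.mWalk_zero.trans hτ'.mWalk_zero.symm

theorem stmt19 (n : ℕ) (hn : 1 ≤ n)
    (F : Finset (Fin n → ZMod 2)) (hF : ∀ x, x ∈ F ↔ (wt x = 0 ∨ wt x = 2))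
    (m : ℕ) (E : Finset (Fin m → ZMod 2)) (hE : ∀ e ∈ E, e ≠ 0)
    (τ τ' : (Fin m → ZMod 2) → (Fin n → ZMod 2))
    (hτ : IsMHom E F τ) (hτ' : IsMHom E F τ') :
    MWalk E F τ τ' := by
  have : NeZero n := ⟨Nat.one_le_iff_ne_zero.1 hn⟩
  obtain rfl : F = loopedClique (Fin n) :=
    Finset.ext fun x => (hF x).trans mem_loopedClique_iff_wt.symm
  exact stmt19_general hτ hτ'
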